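/- arXiv:1507.03099 — 2 statements merged into one kernel-verified Lean document; each statement's English description precedes it below -/
import Mathlib

section
/- For every integer n ≥ 0, a_3(n) = d_{1,3}(3n+1) − d_{2,3}(3n+1), where d_{r,3}(m) denotes the number of positive divisors of m that are congruent to r modulo 3. -/
/-- The hook length of the cell `(i, j)` in a Young diagram `μ`:
arm length + leg length + 1. -/
def YoungDiagram.hookLength (μ : YoungDiagram) (i j : ℕ) : ℕ :=
  μ.rowLen i + μ.colLen j - i - j - 1

/-- A Young diagram (equivalently, a partition) is a 3-core if none of its
hook numbers is divisible by 3. -/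
def YoungDiagram.IsThreeCore (μ : YoungDiagram) : Prop :=
  ∀ c ∈ μ.cells, ¬ (3 ∣ μ.hookLength c.1 c.2)

/-- `a3 n` is the number of 3-core partitions of `n`. -/
noncomputable def a3 (n : ℕ) : ℕ :=
  Nat.card {μ : YoungDiagram // μ.card = n ∧ μ.IsThreeCore}

/-- `A3 n` is the number of partition pairs of `n` in which each partition is a 3-core. -/
noncomputable def A3 (n : ℕ) : ℕ :=
  Nat.card {p : YoungDiagram × YoungDiagram //
    p.1.card + p.2.card = n ∧ p.1.IsThreeCore ∧ p.2.IsThreeCore}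

/-- `B3 n` is the number of partition triples of `n` in which each partition is a 3-core. -/
noncomputable def B3 (n : ℕ) : ℕ :=
  Nat.card {p : YoungDiagram × YoungDiagram × YoungDiagram //
    p.1.card + p.2.1.card + p.2.2.card = n ∧
    p.1.IsThreeCore ∧ p.2.1.IsThreeCore ∧ p.2.2.IsThreeCore}

/-- `dCount r m` is the number of positive divisors of `m` congruent to `r` modulo 3. -/
def dCount (r m : ℕ) : ℕ := (m.divisors.filter (fun d => d % 3 = r)).card

/-!
Place beads at the first-column hook lengths of a partition. The hook lengths in row `i` are the
differences between the `i`-th bead and the empty positions below it, so `3`-cores are the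
configurations on three runners in which every bead is pushed down. With `p` beads on runner `1` and
`q` on runner `2` (runner `0` is empty), the size of the partition is `p ^ 2 - p * q + q ^ 2 + q`,
i.e. `(3 * p + 1) + (3 * q + 2) * ω` has norm `9 * n + 3`. Up to the six symmetries generated by
multiplication by `ω` and the reflection `x + y * ω ↦ y + x * ω`, every Eisenstein integer of this
norm arises exactly once, so `6 * a3 n` is the number of Eisenstein integers of norm `9 * n + 3`.

The number of Eisenstein integers of norm `m` is `6 * ∑ d ∣ m, χ d`, with `χ` the nontrivial
character modulo `3`: by the factorization of rational primes in `ℤ[ω]`, both sides are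
eigenvectors of the Hecke operators with eigenvalues `1 + χ p`, and this determines them up to their
value at `1`. Finally the ramified prime `3` does not change the count, and `9 * n + 3 =
3 * (3 * n + 1)`.
-/

open Finset

namespace ThreeCore

section Flush

/-- On an abacus with `t` runners whose beads are the elements of `X`, no bead can be moved down
by one position on its runner. -/
def IsFlush (t : ℕ) (X : Finset ℕ) : Prop :=
  ∀ x ∈ X, t ≤ x → x - t ∈ X

variable {t : ℕ} {X : Finset ℕ}

theorem IsFlush.sub_mul_mem (hX : IsFlush t X) (k : ℕ) {x : ℕ} (hx : x ∈ X) (hle : t * k ≤ x) :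
    x - t * k ∈ X := by
  induction k with
  | zero => simpa
  | succ k ih =>
    rw [mul_add_one] at hle ⊢
    rw [← Nat.sub_sub]
    exact hX _ (ih (by lia)) (by lia)

theorem IsFlush.exists_mul_add_mem_iff_lt (hX : IsFlush t X) (ht : 0 < t) (r : ℕ) :
    ∃ k, ∀ i, t * i + r ∈ X ↔ i < k := by
  have hinj : Function.Injective fun i => t * i + r :=
    (add_left_injective r).comp (mul_right_injective₀ ht.ne')
  have hex : ∃ i, t * i + r ∉ X := by
    by_contra! hall
    exact Set.infinite_of_injective_forall_mem hinj hall X.finite_toSet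
  classical
  refine ⟨Nat.find hex, fun i => ⟨fun hi => ?_, fun hi => not_not.1 (Nat.find_min hex hi)⟩⟩
  by_contra! hle
  obtain ⟨d, rfl⟩ := Nat.exists_eq_add_of_le hle
  refine Nat.find_spec hex ?_
  convert hX.sub_mul_mem d hi (by lia) using 1
  lia

end Flush

section BetaSet

variable (μ : YoungDiagram)

/-- The beta-set of a partition: the hook lengths of the cells in the first column. -/
def betaSet : Finset ℕ :=
  (range (μ.colLen 0)).image fun i => μ.hookLength i 0

/-- The `j`-th element, in increasing order, of the complement of the beta-set of `μ`. -/
def gap (j : ℕ) : ℕ :=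
  j + μ.colLen 0 - μ.colLen j

variable {μ}

theorem lt_rowLen_iff_lt_colLen {i j : ℕ} : j < μ.rowLen i ↔ i < μ.colLen j := by
  rw [← YoungDiagram.mem_iff_lt_rowLen, YoungDiagram.mem_iff_lt_colLen]

theorem mem_betaSet {x : ℕ} : x ∈ betaSet μ ↔ ∃ i < μ.colLen 0, μ.hookLength i 0 = x := by
  simp [betaSet]

theorem gap_zero : gap μ 0 = 0 := by
  simp [gap]

theorem strictMono_gap : StrictMono (gap μ) := by
  refine strictMono_nat_of_lt_succ fun j => ?_
  have := μ.colLen_anti j (j + 1) (by lia)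
  have := μ.colLen_anti 0 j (by lia)
  unfold gap
  lia

theorem gap_add_hookLength {i j : ℕ} (h : (i, j) ∈ μ) :
    gap μ j + μ.hookLength i j = μ.hookLength i 0 := by
  have := YoungDiagram.mem_iff_lt_rowLen.1 h
  have := YoungDiagram.mem_iff_lt_colLen.1 h
  have := μ.colLen_anti 0 j (by lia)
  unfold gap YoungDiagram.hookLength
  lia

theorem gap_lt_hookLength_iff {i j : ℕ} (hi : i < μ.colLen 0) :
    gap μ j < μ.hookLength i 0 ↔ (i, j) ∈ μ := by
  have := lt_rowLen_iff_lt_colLen (μ := μ) (i := i) (j := j)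
  have := lt_rowLen_iff_lt_colLen (μ := μ) (i := i) (j := 0)
  have := μ.colLen_anti 0 j (by lia)
  rw [YoungDiagram.mem_iff_lt_colLen]
  unfold gap YoungDiagram.hookLength
  lia

theorem gap_notMem_betaSet (j : ℕ) : gap μ j ∉ betaSet μ := by
  rw [mem_betaSet]
  rintro ⟨i, hi, h⟩
  have := lt_rowLen_iff_lt_colLen (μ := μ) (i := i) (j := j)
  have := μ.colLen_anti 0 j (by lia)
  unfold gap YoungDiagram.hookLength at h
  lia

theorem mem_betaSet_of_gap_lt_of_lt_gap {j y : ℕ} (hj : gap μ j < y) (hj' : y < gap μ (j + 1)) :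
    y ∈ betaSet μ := by
  have := μ.colLen_anti 0 j (by lia)
  have := μ.colLen_anti 0 (j + 1) (by lia)
  have := lt_rowLen_iff_lt_colLen (μ := μ) (i := j + μ.colLen 0 - y) (j := j)
  have := lt_rowLen_iff_lt_colLen (μ := μ) (i := j + μ.colLen 0 - y) (j := j + 1)
  unfold gap at hj hj'
  refine mem_betaSet.2 ⟨j + μ.colLen 0 - y, by lia, ?_⟩
  unfold YoungDiagram.hookLength
  lia

theorem range_gap : Set.range (gap μ) = (betaSet μ : Set ℕ)ᶜ := by
  refine Set.Subset.antisymm (Set.range_subset_iff.2 gap_notMem_betaSet) fun y hy => ?_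
  rcases y.eq_zero_or_pos with rfl | hpos
  · exact ⟨0, gap_zero⟩
  · obtain ⟨j, hj, hj'⟩ := strictMono_gap.exists_between_of_tendsto_atTop
      strictMono_gap.tendsto_atTop (gap_zero.trans_lt hpos)
    exact ⟨j + 1, (hj'.eq_or_lt.resolve_right
      fun hlt => hy (mem_betaSet_of_gap_lt_of_lt_gap hj hlt)).symm⟩

theorem zero_notMem_betaSet : 0 ∉ betaSet μ :=
  gap_zero (μ := μ) ▸ gap_notMem_betaSet 0

theorem injOn_hookLength_zero : Set.InjOn (fun i => μ.hookLength i 0) (range (μ.colLen 0)) := by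
  refine StrictAntiOn.injOn fun i hi i' hi' hlt => ?_
  simp only [coe_range, Set.mem_Iio] at hi hi'
  have := lt_rowLen_iff_lt_colLen (μ := μ) (i := i) (j := 0)
  have := μ.rowLen_anti i i' hlt.le
  unfold YoungDiagram.hookLength
  lia

theorem card_betaSet : #(betaSet μ) = μ.colLen 0 := by
  rw [betaSet, card_image_of_injOn injOn_hookLength_zero, card_range]

theorem betaSet_injective : Function.Injective betaSet := by
  intro μ ν h
  have hlen : μ.colLen 0 = ν.colLen 0 := by rw [← card_betaSet, h, card_betaSet]
  have hgap : gap μ = gap ν := by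
    rw [← strictMono_gap.range_inj strictMono_gap, range_gap, range_gap, h]
  ext ⟨i, j⟩
  have := congrFun hgap j
  have := μ.colLen_anti 0 j (by lia)
  have := ν.colLen_anti 0 j (by lia)
  unfold gap at *
  rw [YoungDiagram.mem_cells, YoungDiagram.mem_cells, YoungDiagram.mem_iff_lt_colLen,
    YoungDiagram.mem_iff_lt_colLen]
  lia

theorem card_eq_sum_rowLen : μ.card = ∑ i ∈ range (μ.colLen 0), μ.rowLen i := by
  have hfst : ∀ c ∈ μ.cells, c.1 ∈ range (μ.colLen 0) := fun c hc => mem_range.2 <|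
    YoungDiagram.mem_iff_lt_colLen.1 (μ.up_left_mem le_rfl (Nat.zero_le c.2) hc)
  rw [YoungDiagram.card, card_eq_sum_card_fiberwise hfst]
  exact sum_congr rfl fun i _ => μ.rowLen_eq_card.symm

theorem sum_betaSet : ∑ x ∈ betaSet μ, x = μ.card + ∑ i ∈ range (μ.colLen 0), i := by
  rw [betaSet, sum_image injOn_hookLength_zero, card_eq_sum_rowLen,
    ← sum_range_reflect (fun i => i), ← sum_add_distrib]
  refine sum_congr rfl fun i hi => ?_
  have := mem_range.1 hi
  unfold YoungDiagram.hookLength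
  lia

/-- Differences between the `i`-th element of the beta-set and the smaller elements of its
complement are the hook lengths in row `i`. -/
theorem forall_not_dvd_hookLength_iff_isFlush {t : ℕ} :
    (∀ c ∈ μ.cells, ¬ t ∣ μ.hookLength c.1 c.2) ↔ IsFlush t (betaSet μ) := by
  constructor
  · intro hcore x hx htx
    by_contra hgap
    obtain ⟨j, hj⟩ : x - t ∈ Set.range (gap μ) := range_gap ▸ hgap
    have hne : x - t ≠ x := fun h => hgap (by rwa [h])
    obtain ⟨i, hi, rfl⟩ := mem_betaSet.1 hx
    have hmem : (i, j) ∈ μ := (gap_lt_hookLength_iff hi).1 (by lia)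
    refine hcore (i, j) hmem (dvd_of_eq ?_)
    have := gap_add_hookLength hmem
    lia
  · rintro hflush ⟨i, j⟩ hmem ⟨k, hk⟩
    have hi : i < μ.colLen 0 :=
      YoungDiagram.mem_iff_lt_colLen.1 (μ.up_left_mem le_rfl j.zero_le hmem)
    have hgap : gap μ j = μ.hookLength i 0 - t * k := by
      have := gap_add_hookLength hmem
      lia
    exact gap_notMem_betaSet j <| hgap ▸ hflush.sub_mul_mem k (mem_betaSet.2 ⟨i, hi, rfl⟩) (by
      have := gap_add_hookLength hmem
      lia)

end BetaSet

section OfBetaSet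

variable {X : Finset ℕ}

theorem infinite_setOf_notMem : {x | x ∉ X}.Infinite :=
  X.finite_toSet.infinite_compl

theorem card_filter_lt_nth_notMem_add (j : ℕ) :
    #{x ∈ X | x < Nat.nth (· ∉ X) j} + j = Nat.nth (· ∉ X) j := by
  set y := Nat.nth (· ∉ X) j
  have hgaps : #{x ∈ range y | x ∉ X} = j := by
    rw [← Nat.count_eq_card_filter_range, Nat.count_nth_of_infinite infinite_setOf_notMem]
  have hbeads : {x ∈ X | x < y} = {x ∈ range y | x ∈ X} := by
    ext x
    simp [and_comm]
  calc #{x ∈ X | x < y} + j = #{x ∈ range y | x ∈ X} + #{x ∈ range y | x ∉ X} := by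
        rw [hbeads, hgaps]
    _ = y := by rw [card_filter_add_card_filter_not, card_range]

variable (X)

/-- The partition with beta-set `X`. Its `j`-th column has one cell for each element of `X` above
the `j`-th element of the complement of `X`. -/
noncomputable def ofBetaSet : YoungDiagram where
  cells := {c ∈ range #X ×ˢ range (X.sup id) | c.1 < #{x ∈ X | Nat.nth (· ∉ X) c.2 < x}}
  isLowerSet := by
    rintro ⟨i, j⟩ ⟨i', j'⟩ ⟨hi, hj⟩ h
    have hmono : Nat.nth (· ∉ X) j' ≤ Nat.nth (· ∉ X) j :=
      Nat.nth_monotone infinite_setOf_notMem hj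
    have hcard : #{x ∈ X | Nat.nth (· ∉ X) j < x} ≤ #{x ∈ X | Nat.nth (· ∉ X) j' < x} :=
      card_le_card (monotone_filter_right _ fun x _ hx => hmono.trans_lt hx)
    simp only [coe_filter, mem_product, mem_range, Set.mem_ofPred_eq] at h ⊢
    simp only at hi hj
    lia

theorem colLen_ofBetaSet (j : ℕ) :
    (ofBetaSet X).colLen j = #{x ∈ X | Nat.nth (· ∉ X) j < x} := by
  refine eq_of_forall_lt_iff fun i => ?_
  rw [← YoungDiagram.mem_iff_lt_colLen, ← YoungDiagram.mem_cells, ofBetaSet]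
  simp only [mem_filter, mem_product, mem_range, and_iff_right_iff_imp]
  intro hi
  obtain ⟨x, hx⟩ := card_pos.1 (i.zero_le.trans_lt hi)
  rw [mem_filter] at hx
  have hj : j ≤ Nat.nth (· ∉ X) j := by
    have := card_filter_lt_nth_notMem_add (X := X) j
    lia
  exact ⟨hi.trans_le (card_filter_le _ _), (hj.trans_lt hx.2).trans_le (le_sup (f := id) hx.1)⟩

variable {X}

theorem colLen_zero_ofBetaSet (hX : 0 ∉ X) : (ofBetaSet X).colLen 0 = #X := by
  have hnth : Nat.nth (· ∉ X) 0 = 0 := Nat.nth_zero_of_zero hX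
  rw [colLen_ofBetaSet, hnth, filter_true_of_mem]
  exact fun x hx => Nat.pos_of_ne_zero fun h => hX (h ▸ hx)

theorem gap_ofBetaSet (hX : 0 ∉ X) : gap (ofBetaSet X) = Nat.nth (· ∉ X) := by
  ext j
  have hsplit := card_filter_add_card_filter_not (s := X) (fun x => Nat.nth (· ∉ X) j < x)
  have hle : {x ∈ X | ¬ Nat.nth (· ∉ X) j < x} = {x ∈ X | x < Nat.nth (· ∉ X) j} :=
    filter_congr fun x hx => not_lt.trans <| (ne_of_mem_of_not_mem hx
      (Nat.nth_mem_of_infinite infinite_setOf_notMem j)).le_iff_lt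
  have hbelow := card_filter_lt_nth_notMem_add (X := X) j
  rw [hle] at hsplit
  rw [gap, colLen_zero_ofBetaSet hX, colLen_ofBetaSet]
  lia

theorem betaSet_ofBetaSet (hX : 0 ∉ X) : betaSet (ofBetaSet X) = X := by
  rw [← coe_inj, ← compl_inj_iff, ← range_gap, gap_ofBetaSet hX]
  exact Nat.range_nth_of_infinite infinite_setOf_notMem

end OfBetaSet

section Abacus

/-- The flush configuration on three runners with runner `0` empty, `p` beads on runner `1` and
`q` beads on runner `2`. -/
def abacus (p q : ℕ) : Finset ℕ :=
  (range p).image (fun i => 3 * i + 1) ∪ (range q).image (fun i => 3 * i + 2)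

theorem mem_abacus {p q x : ℕ} :
    x ∈ abacus p q ↔ x % 3 = 1 ∧ x < 3 * p ∨ x % 3 = 2 ∧ x < 3 * q := by
  simp only [abacus, mem_union, mem_image, mem_range]
  constructor
  · rintro (⟨i, hi, rfl⟩ | ⟨i, hi, rfl⟩) <;> lia
  · rintro (⟨hmod, hlt⟩ | ⟨hmod, hlt⟩)
    · exact Or.inl ⟨x / 3, by lia, by lia⟩
    · exact Or.inr ⟨x / 3, by lia, by lia⟩

theorem sum_abacus {M : Type*} [AddCommMonoid M] (f : ℕ → M) (p q : ℕ) :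
    ∑ x ∈ abacus p q, f x = ∑ i ∈ range p, f (3 * i + 1) + ∑ i ∈ range q, f (3 * i + 2) := by
  rw [abacus, sum_union, sum_image, sum_image]
  · exact fun i _ i' _ h => by lia
  · exact fun i _ i' _ h => by lia
  · simp only [disjoint_left, mem_image, mem_range]
    lia

theorem card_abacus (p q : ℕ) : #(abacus p q) = p + q := by
  rw [card_eq_sum_ones, sum_abacus]
  simp

theorem abacus_injective : Function.Injective fun x : ℕ × ℕ => abacus x.1 x.2 := by
  rintro ⟨p, q⟩ ⟨p', q'⟩ h
  have hmem (x : ℕ) := (Finset.ext_iff.1 h) x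
  simp only [mem_abacus] at hmem
  have := hmem (3 * p + 1)
  have := hmem (3 * p' + 1)
  have := hmem (3 * q + 2)
  have := hmem (3 * q' + 2)
  rw [Prod.mk.injEq]
  omega

theorem zero_notMem_abacus (p q : ℕ) : 0 ∉ abacus p q := by
  simp [mem_abacus]

theorem isFlush_abacus (p q : ℕ) : IsFlush 3 (abacus p q) := by
  intro x hx hle
  rw [mem_abacus] at hx ⊢
  lia

theorem IsFlush.exists_eq_abacus {X : Finset ℕ} (hX : IsFlush 3 X) (h0 : 0 ∉ X) :
    ∃ p q, X = abacus p q := by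
  obtain ⟨p, hp⟩ := hX.exists_mul_add_mem_iff_lt three_pos 1
  obtain ⟨q, hq⟩ := hX.exists_mul_add_mem_iff_lt three_pos 2
  refine ⟨p, q, Finset.ext fun x => ?_⟩
  have hzero : x % 3 = 0 → x ∉ X := fun hmod hx => h0 <| by
    have := hX.sub_mul_mem (x / 3) hx (by lia)
    rwa [show x - 3 * (x / 3) = 0 by lia] at this
  have hone := hp (x / 3)
  have htwo := hq (x / 3)
  have hdiv := Nat.div_add_mod x 3
  rw [mem_abacus]
  rcases (by lia : x % 3 = 0 ∨ x % 3 = 1 ∨ x % 3 = 2) with hmod | hmod | hmod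
  · simp [hmod, hzero]
  · rw [← hmod, hdiv] at hone
    lia
  · rw [← hmod, hdiv] at htwo
    lia

theorem isThreeCore_iff_isFlush {μ : YoungDiagram} :
    μ.IsThreeCore ↔ IsFlush 3 (betaSet μ) :=
  forall_not_dvd_hookLength_iff_isFlush

theorem card_add_mul_of_betaSet_eq_abacus {μ : YoungDiagram} {p q : ℕ}
    (h : betaSet μ = abacus p q) : μ.card + p * q = p ^ 2 + q ^ 2 + q := by
  have hlen : μ.colLen 0 = p + q := by rw [← card_betaSet, h, card_abacus]
  have hsum := sum_betaSet (μ := μ)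
  rw [h, hlen, sum_abacus, sum_add_distrib, sum_add_distrib, ← mul_sum, ← mul_sum] at hsum
  have gauss (k : ℕ) : (∑ i ∈ range k, i : ℤ) * 2 = k * (k - 1) := by
    induction k with
    | zero => simp
    | succ k ih =>
      rw [sum_range_succ, add_mul, ih]
      push_cast
      ring
  simp only [sum_const, card_range, smul_eq_mul] at hsum
  zify at hsum ⊢
  have hp := gauss p
  have hq := gauss q
  have hpq := gauss (p + q)
  push_cast at hpq
  linarith

theorem image_betaSet_threeCores (n : ℕ) :
    betaSet '' {μ | μ.card = n ∧ μ.IsThreeCore} =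
      (fun x : ℕ × ℕ => abacus x.1 x.2) '' {x | x.1 ^ 2 + x.2 ^ 2 + x.2 = n + x.1 * x.2} := by
  ext X
  constructor
  · rintro ⟨μ, ⟨hcard, hcore⟩, rfl⟩
    obtain ⟨p, q, hpq⟩ := (isThreeCore_iff_isFlush.1 hcore).exists_eq_abacus zero_notMem_betaSet
    exact ⟨(p, q), hcard ▸ (card_add_mul_of_betaSet_eq_abacus hpq).symm, hpq.symm⟩
  · rintro ⟨⟨p, q⟩, hpq, rfl⟩
    have hbeta := betaSet_ofBetaSet (zero_notMem_abacus p q)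
    refine ⟨ofBetaSet (abacus p q), ⟨?_, ?_⟩, hbeta⟩
    · exact Nat.add_right_cancel ((card_add_mul_of_betaSet_eq_abacus hbeta).trans hpq)
    · rw [isThreeCore_iff_isFlush, hbeta]
      exact isFlush_abacus p q

theorem a3_eq_ncard (n : ℕ) :
    a3 n = {x : ℕ × ℕ | x.1 ^ 2 + x.2 ^ 2 + x.2 = n + x.1 * x.2}.ncard := by
  rw [← Set.ncard_image_of_injective _ abacus_injective, ← image_betaSet_threeCores,
    Set.ncard_image_of_injective _ betaSet_injective]
  rfl

end Abacus

/-- The ring `ℤ[ω]` of Eisenstein integers `x + y * ω`, with `ω ^ 2 = -1 - ω`. -/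
abbrev Eisenstein : Type := QuadraticAlgebra ℤ (-1) (-1)

namespace Eisenstein

open QuadraticAlgebra

variable {p : ℕ} {z : Eisenstein}

theorem norm_eq_sq_sub_mul_add_sq (z : Eisenstein) :
    z.norm = z.re ^ 2 - z.re * z.im + z.im ^ 2 := by
  rw [norm_def]
  ring

theorem three_mul_re_sq_le_four_mul_norm (z : Eisenstein) : 3 * z.re ^ 2 ≤ 4 * z.norm := by
  rw [norm_eq_sq_sub_mul_add_sq]
  linarith [sq_nonneg (z.re - 2 * z.im)]

theorem three_mul_im_sq_le_four_mul_norm (z : Eisenstein) : 3 * z.im ^ 2 ≤ 4 * z.norm := by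
  rw [norm_eq_sq_sub_mul_add_sq]
  linarith [sq_nonneg (z.im - 2 * z.re)]

theorem norm_nonneg (z : Eisenstein) : 0 ≤ z.norm := by
  linarith [three_mul_re_sq_le_four_mul_norm z, sq_nonneg z.re]

theorem norm_eq_zero_iff : z.norm = 0 ↔ z = 0 := by
  refine ⟨fun h => ?_, by rintro rfl; exact norm_zero⟩
  have hre := h ▸ three_mul_re_sq_le_four_mul_norm z
  have him := h ▸ three_mul_im_sq_le_four_mul_norm z
  ext
  · exact sq_nonpos_iff _ |>.1 (by lia)
  · exact sq_nonpos_iff _ |>.1 (by lia)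

theorem norm_pos_iff : 0 < z.norm ↔ z ≠ 0 := by
  rw [(norm_nonneg z).lt_iff_ne', ne_eq, norm_eq_zero_iff]

theorem norm_modEq_three (z : Eisenstein) : z.norm ≡ (z.re + z.im) ^ 2 [ZMOD 3] := by
  rw [norm_eq_sq_sub_mul_add_sq, Int.modEq_iff_dvd]
  exact ⟨z.re * z.im, by ring⟩

theorem isUnit_iff_norm_eq_one : IsUnit z ↔ z.norm = 1 := by
  rw [isUnit_iff_norm_isUnit, Int.isUnit_iff]
  have := norm_nonneg z
  lia

theorem norm_dvd_norm {w : Eisenstein} (h : z ∣ w) : z.norm ∣ w.norm :=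
  map_dvd QuadraticAlgebra.norm h

theorem exists_abs_two_mul_sub_mul_le (a : ℤ) {n : ℤ} (hn : 0 < n) :
    ∃ k, |2 * (a - n * k)| ≤ n := by
  refine ⟨(2 * a + n) / (2 * n), ?_⟩
  have := Int.mul_ediv_add_emod (2 * a + n) (2 * n)
  have := Int.emod_nonneg (2 * a + n) (b := 2 * n) (by lia)
  have := Int.emod_lt_of_pos (2 * a + n) (b := 2 * n) (by lia)
  exact abs_le.2 ⟨by linarith, by linarith⟩

/-- Multiplying by `star b`, one has to approximate `a * star b` by a multiple of `b.norm`, which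
is done coordinatewise. -/
theorem exists_norm_sub_mul_lt (a : Eisenstein) {b : Eisenstein} (hb : b ≠ 0) :
    ∃ q : Eisenstein, (a - b * q).norm < b.norm := by
  have hpos := norm_pos_iff.2 hb
  obtain ⟨x, hx⟩ := exists_abs_two_mul_sub_mul_le (a * star b).re hpos
  obtain ⟨y, hy⟩ := exists_abs_two_mul_sub_mul_le (a * star b).im hpos
  refine ⟨⟨x, y⟩, ?_⟩
  set u := (a * star b).re - b.norm * x with hu
  set v := (a * star b).im - b.norm * y with hv
  have hclear : (a - b * ⟨x, y⟩) * star b = ⟨u, v⟩ := by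
    rw [sub_mul, mul_right_comm, ← algebraMap_norm_eq_mul_star]
    ext <;> simp [hu, hv]
  have hnorm : (a - b * ⟨x, y⟩).norm * b.norm = u ^ 2 - u * v + v ^ 2 := by
    rw [← norm_star b, ← map_mul, hclear, norm_eq_sq_sub_mul_add_sq]
  have hsmall : 4 * (u ^ 2 - u * v + v ^ 2) ≤ 3 * b.norm ^ 2 := by
    have hu : (2 * u) ^ 2 ≤ b.norm ^ 2 := sq_le_sq.2 (hx.trans (le_abs_self _))
    have hv : (2 * v) ^ 2 ≤ b.norm ^ 2 := sq_le_sq.2 (hy.trans (le_abs_self _))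
    linarith [sq_nonneg (u + v)]
  nlinarith

noncomputable instance : EuclideanDomain Eisenstein where
  quotient a b := open scoped Classical in
    if hb : b = 0 then 0 else (exists_norm_sub_mul_lt a hb).choose
  quotient_zero _ := dif_pos rfl
  remainder a b := open scoped Classical in
    a - b * if hb : b = 0 then 0 else (exists_norm_sub_mul_lt a hb).choose
  quotient_mul_add_remainder_eq _ _ := add_sub_cancel _ _
  r a b := a.norm.toNat < b.norm.toNat
  r_wellFounded := (measure fun z : Eisenstein => z.norm.toNat).wf
  remainder_lt a b hb := by
    rw [dif_neg hb, Int.toNat_lt_toNat (norm_pos_iff.2 hb)]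
    exact (exists_norm_sub_mul_lt a hb).choose_spec
  mul_left_not_lt a b hb := by
    have ha := norm_nonneg a
    have hb := norm_pos_iff.2 hb
    rw [map_mul, Int.toNat_mul ha hb.le, not_lt]
    exact Nat.le_mul_of_pos_right _ (by lia)

theorem prime_of_prime_norm (h : Prime z.norm) : Prime z := by
  have : IsLocalHom (QuadraticAlgebra.norm : Eisenstein →* ℤ) := ⟨fun _ => isUnit_iff_norm_isUnit.2⟩
  exact (Irreducible.of_map (f := QuadraticAlgebra.norm) h.irreducible).prime

theorem natCast_dvd_iff {n : ℕ} : (n : Eisenstein) ∣ z ↔ (n : ℤ) ∣ z.re ∧ (n : ℤ) ∣ z.im := by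
  rw [← algebraMap_dvd_iff, map_natCast]

theorem natCast_dvd_mul_star_iff {n : ℕ} : (n : Eisenstein) ∣ z * star z ↔ (n : ℤ) ∣ z.norm := by
  rw [← algebraMap_norm_eq_mul_star, ← map_natCast (algebraMap ℤ Eisenstein),
    algebraMap_dvd_iff_dvd]

theorem dvd_star_iff {w : Eisenstein} : w ∣ star z ↔ star w ∣ z := by
  rw [← map_dvd_iff (starRingAut (R := Eisenstein))]
  simp

theorem exists_norm_eq_of_not_prime (hp : p.Prime) (h : ¬ Prime (p : Eisenstein)) :
    ∃ z : Eisenstein, z.norm = p := by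
  have hunit : ¬ IsUnit (p : Eisenstein) := by
    rw [isUnit_iff_norm_eq_one, QuadraticAlgebra.norm_natCast]
    exact_mod_cast (Nat.one_lt_pow two_ne_zero hp.one_lt).ne'
  simp only [← irreducible_iff_prime, irreducible_iff, hunit, not_false_eq_true, true_and,
    not_forall, not_or] at h
  obtain ⟨x, y, hxy, hx, hy⟩ := h
  have hmul : x.norm.natAbs * y.norm.natAbs = p ^ 2 := by
    rw [← Int.natAbs_mul, ← map_mul, ← hxy, QuadraticAlgebra.norm_natCast]
    simp [Int.natAbs_pow]
  rw [isUnit_iff_norm_eq_one] at hx hy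
  have := norm_nonneg x
  have := norm_nonneg y
  rw [hp.mul_eq_prime_sq_iff (by lia) (by lia)] at hmul
  exact ⟨x, by lia⟩

theorem exists_dvd_sq_add_self_add_one (hp : p.Prime) (h : p % 3 = 1) :
    ∃ k : ℤ, (p : ℤ) ∣ k ^ 2 + k + 1 := by
  have := Fact.mk hp
  obtain ⟨u, hu⟩ := exists_prime_orderOf_dvd_card (G := (ZMod p)ˣ) 3
    (by rw [ZMod.card_units]; lia)
  have hroot : IsPrimitiveRoot (u : ZMod p) 3 :=
    IsPrimitiveRoot.coe_units_iff.2 (hu ▸ IsPrimitiveRoot.orderOf u)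
  obtain ⟨k, hk⟩ := ZMod.intCast_surjective (u : ZMod p)
  refine ⟨k, (ZMod.intCast_zmod_eq_zero_iff_dvd _ _).1 ?_⟩
  push_cast
  rw [hk, ← hroot.geom_sum_eq_zero (by lia)]
  simp only [sum_range_succ, sum_range_zero, pow_zero, pow_one]
  ring

theorem exists_norm_eq_of_mod_three_eq_one (hp : p.Prime) (h : p % 3 = 1) :
    ∃ z : Eisenstein, z.norm = p := by
  refine exists_norm_eq_of_not_prime hp fun hprime => ?_
  obtain ⟨k, hk⟩ := exists_dvd_sq_add_self_add_one hp h
  have hdvd : (p : Eisenstein) ∣ ⟨k, -1⟩ * star ⟨k, -1⟩ := by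
    rw [natCast_dvd_mul_star_iff, norm_eq_sq_sub_mul_add_sq]
    convert hk using 1
    ring
  have hunit : ¬ (p : ℤ) ∣ 1 := by
    exact_mod_cast hp.one_lt.ne' ∘ Nat.dvd_one.1
  rcases hprime.dvd_or_dvd hdvd with h' | h'
  all_goals simp [natCast_dvd_iff, hunit] at h'

theorem prime_natCast_of_mod_three_eq_two (hp : p.Prime) (h : p % 3 = 2) :
    Prime (p : Eisenstein) := by
  by_contra hprime
  obtain ⟨z, hz⟩ := exists_norm_eq_of_not_prime hp hprime
  have hsq : z.norm % 3 = _ := norm_modEq_three z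
  rw [pow_two, Int.mul_emod] at hsq
  rcases (by lia : (z.re + z.im) % 3 = 0 ∨ (z.re + z.im) % 3 = 1 ∨ (z.re + z.im) % 3 = 2)
    with h' | h' | h' <;> rw [h'] at hsq <;> lia

theorem natCast_dvd_of_dvd_norm_of_prime (hp : Prime (p : Eisenstein)) (hz : (p : ℤ) ∣ z.norm) :
    (p : Eisenstein) ∣ z := by
  refine (hp.dvd_or_dvd (natCast_dvd_mul_star_iff.2 hz)).elim id fun h => ?_
  simpa using dvd_star_iff.1 h

theorem dvd_or_star_dvd_of_norm_dvd_norm {π : Eisenstein} (hπ : Prime π.norm)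
    (hz : π.norm ∣ z.norm) : π ∣ z ∨ star π ∣ z := by
  have hdvd : π ∣ z * star z := by
    rw [← algebraMap_norm_eq_mul_star]
    exact (algebraMap_norm_eq_mul_star π ▸ dvd_mul_right π (star π)).trans
      (algebraMap_dvd_iff_dvd.2 hz)
  exact ((prime_of_prime_norm hπ).dvd_or_dvd hdvd).imp_right dvd_star_iff.1

/-- If `π ∣ star π` then `π` divides `π - star π = π.im * (1 + 2 * ω)`, of norm `3 * π.im ^ 2`. -/
theorem not_dvd_star_of_prime_norm {π : Eisenstein} (hπ : Prime π.norm) (h3 : ¬ π.norm ∣ 3) :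
    ¬ π ∣ star π := by
  intro h
  have him : π.norm ∣ π.im := by
    have hdvd : π.norm ∣ 3 * π.im ^ 2 := by
      convert norm_dvd_norm (dvd_sub_self_left.2 h) using 1
      simp only [norm_eq_sq_sub_mul_add_sq, re_sub, im_sub, re_star, im_star]
      ring
    exact hπ.dvd_of_dvd_pow ((hπ.dvd_or_dvd hdvd).resolve_left h3)
  have hre : π.norm ∣ π.re := by
    refine hπ.dvd_of_dvd_pow (n := 2) ?_
    rw [show π.re ^ 2 = π.norm + π.im * (π.re - π.im) by rw [norm_eq_sq_sub_mul_add_sq]; ring]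
    exact dvd_add_self_left.2 (him.mul_right _)
  have hsq : π.norm ^ 2 ∣ π.norm ^ 1 := by
    simpa using norm_dvd_norm (algebraMap_dvd_iff.2 ⟨hre, him⟩)
  exact absurd ((pow_dvd_pow_iff hπ.ne_zero hπ.not_isUnit).1 hsq) (by lia)

/-- The Eisenstein integers of norm `m`. -/
def normSphere (m : ℕ) : Set Eisenstein :=
  {z | z.norm = m}

/-- The number of representations of `m` by the quadratic form `x ^ 2 - x * y + y ^ 2`. -/
noncomputable def reprCount (m : ℕ) : ℕ :=
  (normSphere m).ncard

theorem mem_normSphere {m : ℕ} : z ∈ normSphere m ↔ z.norm = m :=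
  Iff.rfl

theorem finite_normSphere (m : ℕ) : (normSphere m).Finite := by
  refine (((Set.finite_Icc (-(2 * m) : ℤ) (2 * m)).prod (Set.finite_Icc (-(2 * m) : ℤ) (2 * m)))
    |>.preimage (equivProd (-1) (-1)).injective.injOn).subset fun z hz => ?_
  have hre := mem_normSphere.1 hz ▸ three_mul_re_sq_le_four_mul_norm z
  have him := mem_normSphere.1 hz ▸ three_mul_im_sq_le_four_mul_norm z
  have := Int.natAbs_le_self_sq z.re
  have := Int.natAbs_le_self_sq z.im
  have hre' : z.re ∈ Set.Icc (-(2 * m) : ℤ) (2 * m) := ⟨by lia, by lia⟩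
  have him' : z.im ∈ Set.Icc (-(2 * m) : ℤ) (2 * m) := ⟨by lia, by lia⟩
  exact ⟨hre', him'⟩

theorem normSphere_one :
    normSphere 1 =
      (({⟨1, 0⟩, ⟨-1, 0⟩, ⟨0, 1⟩, ⟨0, -1⟩, ⟨1, 1⟩, ⟨-1, -1⟩} : Finset Eisenstein) :
        Set Eisenstein) := by
  ext ⟨x, y⟩
  simp only [coe_insert, coe_singleton, Set.mem_insert_iff, Set.mem_singleton_iff,
    QuadraticAlgebra.mk.injEq]
  constructor
  · intro h
    have hx : 3 * x ^ 2 ≤ 4 * _ := three_mul_re_sq_le_four_mul_norm ⟨x, y⟩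
    have hy : 3 * y ^ 2 ≤ 4 * _ := three_mul_im_sq_le_four_mul_norm ⟨x, y⟩
    rw [mem_normSphere.1 h, Nat.cast_one] at hx hy
    obtain ⟨hx, hx'⟩ : -1 ≤ x ∧ x ≤ 1 := ⟨by nlinarith, by nlinarith⟩
    obtain ⟨hy, hy'⟩ : -1 ≤ y ∧ y ≤ 1 := ⟨by nlinarith, by nlinarith⟩
    rw [mem_normSphere, norm_eq_sq_sub_mul_add_sq] at h
    interval_cases x <;> interval_cases y <;> simp_all
  · rintro (⟨rfl, rfl⟩ | ⟨rfl, rfl⟩ | ⟨rfl, rfl⟩ | ⟨rfl, rfl⟩ | ⟨rfl, rfl⟩ | ⟨rfl, rfl⟩) <;> rfl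

theorem reprCount_one : reprCount 1 = 6 := by
  rw [reprCount, normSphere_one, Set.ncard_coe_finset]
  rfl

theorem ncard_image_mul_normSphere {w : Eisenstein} (hw : w ≠ 0) (m : ℕ) :
    ((w * ·) '' normSphere m).ncard = reprCount m :=
  Set.ncard_image_of_injective _ (mul_right_injective₀ hw)

theorem image_mul_normSphere {w : Eisenstein} {k : ℕ} (hw : w.norm = k) (hk : k ≠ 0) (m : ℕ) :
    (w * ·) '' normSphere m = {z ∈ normSphere (k * m) | w ∣ z} := by
  ext z
  constructor
  · rintro ⟨v, hv, rfl⟩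
    rw [mem_normSphere] at hv
    refine ⟨?_, dvd_mul_right w v⟩
    rw [mem_normSphere, map_mul, hw, hv, Nat.cast_mul]
  · rintro ⟨hz, v, rfl⟩
    rw [mem_normSphere, map_mul, hw, Nat.cast_mul] at hz
    exact ⟨v, mul_left_cancel₀ (Nat.cast_ne_zero.2 hk) hz, rfl⟩

theorem ncard_natCast_dvd_normSphere {k : ℕ} (hk : k ≠ 0) (m : ℕ) :
    {z ∈ normSphere (k * m) | (k : Eisenstein) ∣ z}.ncard =
      if k ∣ m then reprCount (m / k) else 0 := by
  have hnorm : (k : Eisenstein).norm = (k ^ 2 : ℕ) := by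
    rw [QuadraticAlgebra.norm_natCast, Nat.cast_pow]
  split_ifs with hdvd
  · obtain ⟨l, rfl⟩ := hdvd
    rw [← mul_assoc, ← sq, ← image_mul_normSphere hnorm (pow_ne_zero 2 hk),
      ncard_image_mul_normSphere (Nat.cast_ne_zero.2 hk), Nat.mul_div_cancel_left l hk.bot_lt]
  · convert Set.ncard_empty Eisenstein
    refine Set.eq_empty_of_forall_notMem fun z ⟨hz, hkz⟩ => hdvd ?_
    have hsq := hz ▸ hnorm ▸ norm_dvd_norm hkz
    rw [Int.natCast_dvd_natCast, sq] at hsq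
    exact Nat.dvd_of_mul_dvd_mul_left hk.bot_lt hsq

theorem reprCount_mul_of_prime (hp : Prime (p : Eisenstein)) (m : ℕ) :
    reprCount (p * m) = if p ∣ m then reprCount (m / p) else 0 := by
  have hp0 : p ≠ 0 := by
    rintro rfl
    exact hp.ne_zero Nat.cast_zero
  rw [← ncard_natCast_dvd_normSphere hp0, reprCount]
  congr 1
  ext z
  refine (and_iff_left_of_imp fun hz => natCast_dvd_of_dvd_norm_of_prime hp ?_).symm
  rw [mem_normSphere.1 hz, Nat.cast_mul]
  exact dvd_mul_right _ _

section Split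

variable {π : Eisenstein}

theorem normSphere_mul_eq_union (hp : p.Prime) (hπ : π.norm = p) (m : ℕ) :
    normSphere (p * m) =
      {z ∈ normSphere (p * m) | π ∣ z} ∪ {z ∈ normSphere (p * m) | star π ∣ z} := by
  ext z
  simp only [Set.mem_union, Set.mem_ofPred_eq, ← and_or_left]
  refine (and_iff_left_of_imp fun hz => dvd_or_star_dvd_of_norm_dvd_norm ?_ ?_).symm
  · exact hπ ▸ Nat.prime_iff_prime_int.1 hp
  · rw [hπ, mem_normSphere.1 hz, Nat.cast_mul]
    exact dvd_mul_right _ _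

theorem reprCount_mul_of_associated_star (hp : p.Prime) (hπ : π.norm = p)
    (hstar : Associated π (star π)) (m : ℕ) : reprCount (p * m) = reprCount m := by
  have hπ0 : π ≠ 0 := norm_pos_iff.1 (hπ ▸ mod_cast hp.pos)
  rw [reprCount, normSphere_mul_eq_union hp hπ]
  simp only [← hstar.dvd_iff_dvd_left, Set.union_self]
  rw [← image_mul_normSphere hπ hp.ne_zero, ncard_image_mul_normSphere hπ0]

theorem natCast_dvd_iff_dvd_and_star_dvd (hp : p.Prime) (hπ : π.norm = p)
    (hstar : ¬ π ∣ star π) : (p : Eisenstein) ∣ z ↔ π ∣ z ∧ star π ∣ z := by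
  have hfactor : (p : Eisenstein) = π * star π := by
    rw [← algebraMap_norm_eq_mul_star, hπ, map_natCast]
  constructor
  · rw [hfactor]
    exact fun h => ⟨dvd_of_mul_right_dvd h, dvd_of_mul_left_dvd h⟩
  · rintro ⟨h, w, rfl⟩
    have hprime : Prime π := prime_of_prime_norm (hπ ▸ Nat.prime_iff_prime_int.1 hp)
    rw [hfactor, mul_comm π]
    exact mul_dvd_mul_left _ ((hprime.dvd_or_dvd h).resolve_left hstar)

theorem reprCount_mul_add_of_not_dvd_star (hp : p.Prime) (hπ : π.norm = p)
    (hstar : ¬ π ∣ star π) (m : ℕ) :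
    reprCount (p * m) + (if p ∣ m then reprCount (m / p) else 0) = 2 * reprCount m := by
  have hπ0 : π ≠ 0 := norm_pos_iff.1 (hπ ▸ mod_cast hp.pos)
  have hinter : {z ∈ normSphere (p * m) | π ∣ z} ∩ {z ∈ normSphere (p * m) | star π ∣ z} =
      {z ∈ normSphere (p * m) | (p : Eisenstein) ∣ z} := by
    ext z
    simp only [Set.mem_inter_iff, Set.mem_ofPred_eq,
      natCast_dvd_iff_dvd_and_star_dvd hp hπ hstar]
    tauto
  have hfin := finite_normSphere (p * m)
  rw [← ncard_natCast_dvd_normSphere hp.ne_zero, ← hinter, reprCount,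
    congrArg Set.ncard (normSphere_mul_eq_union hp hπ m),
    Set.ncard_union_add_ncard_inter _ _ (hfin.sep _) (hfin.sep _),
    ← image_mul_normSphere hπ hp.ne_zero,
    ← image_mul_normSphere ((norm_star π).trans hπ) hp.ne_zero,
    ncard_image_mul_normSphere hπ0, ncard_image_mul_normSphere (star_ne_zero.2 hπ0), two_mul]

end Split

theorem reprCount_three_mul (m : ℕ) : reprCount (3 * m) = reprCount m := by
  refine reprCount_mul_of_associated_star (π := ⟨1, -1⟩) Nat.prime_three rfl ?_ m
  have hunit : IsUnit (⟨1, 1⟩ : Eisenstein) := isUnit_iff_norm_eq_one.2 rfl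
  exact ⟨hunit.unit, rfl⟩

theorem reprCount_mul_add_of_mod_three_eq_one (hp : p.Prime) (h : p % 3 = 1) (m : ℕ) :
    reprCount (p * m) + (if p ∣ m then reprCount (m / p) else 0) = 2 * reprCount m := by
  obtain ⟨π, hπ⟩ := exists_norm_eq_of_mod_three_eq_one hp h
  refine reprCount_mul_add_of_not_dvd_star hp hπ (not_dvd_star_of_prime_norm ?_ ?_) m
  · exact hπ ▸ Nat.prime_iff_prime_int.1 hp
  · rw [hπ]
    norm_cast
    rw [Nat.prime_dvd_prime_iff_eq hp Nat.prime_three]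
    rintro rfl
    lia

theorem reprCount_mul_of_mod_three_eq_two (hp : p.Prime) (h : p % 3 = 2) (m : ℕ) :
    reprCount (p * m) = if p ∣ m then reprCount (m / p) else 0 :=
  reprCount_mul_of_prime (prime_natCast_of_mod_three_eq_two hp h) m

end Eisenstein

section Hecke

variable {R : Type*} [CommRing R]

/-- The Hecke operator at the prime `p`, in weight one and with character `χ`, acting on the
sequence of Fourier coefficients of a modular form. -/
def heckeOperator (χ : ℕ →* R) (p : ℕ) (f : ℕ → R) (m : ℕ) : R :=
  f (p * m) + if p ∣ m then χ p * f (m / p) else 0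

/-- The sequence `f` is an eigenvector of all Hecke operators, with the eigenvalues `1 + χ p` of
the weight-one Eisenstein series attached to `χ`. -/
def IsHeckeEigenvector (χ : ℕ →* R) (f : ℕ → R) : Prop :=
  ∀ p, p.Prime → ∀ m ≠ 0, heckeOperator χ p f m = (1 + χ p) * f m

theorem IsHeckeEigenvector.const_mul {χ : ℕ →* R} {f : ℕ → R} (hf : IsHeckeEigenvector χ f)
    (c : R) : IsHeckeEigenvector χ fun m => c * f m := by
  intro p hp m hm
  have h := hf p hp m hm
  unfold heckeOperator at h ⊢
  split_ifs at h ⊢ <;> linear_combination c * h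

theorem IsHeckeEigenvector.eq_of_apply_one_eq {χ : ℕ →* R} {f g : ℕ → R}
    (hf : IsHeckeEigenvector χ f) (hg : IsHeckeEigenvector χ g) (h1 : f 1 = g 1) {m : ℕ}
    (hm : m ≠ 0) : f m = g m := by
  induction m using Nat.strong_induction_on with | h m ih =>
  rcases eq_or_ne m 1 with rfl | hm1
  · exact h1
  have hp : m.minFac.Prime := Nat.minFac_prime hm1
  obtain ⟨k, hk⟩ : m.minFac ∣ m := m.minFac_dvd
  set p := m.minFac
  have hk0 : k ≠ 0 := by
    rintro rfl
    exact hm hk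
  have hkm : k < m := hk ▸ (Nat.lt_mul_iff_one_lt_left hk0.bot_lt).2 hp.one_lt
  have hfk := hf p hp k hk0
  have hgk := hg p hp k hk0
  rw [heckeOperator, ← hk] at hfk hgk
  have hfg : f k = g k := ih k hkm hk0
  split_ifs at hfk hgk with hdvd
  · have hfg' : f (k / p) = g (k / p) := ih (k / p) ((Nat.div_le_self k p).trans_lt hkm)
      (Nat.div_ne_zero_iff.2 ⟨hp.ne_zero, Nat.le_of_dvd hk0.bot_lt hdvd⟩)
    linear_combination hfk - hgk + (1 + χ p) * hfg - χ p * hfg'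
  · linear_combination hfk - hgk + (1 + χ p) * hfg

theorem filter_dvd_divisors_mul {p : ℕ} (hp : p ≠ 0) (m : ℕ) :
    {d ∈ (p * m).divisors | p ∣ d} = m.divisors.image (p * ·) := by
  ext d
  simp only [mem_filter, Nat.mem_divisors, mem_image, mul_ne_zero_iff]
  constructor
  · rintro ⟨⟨hd, -, hm⟩, e, rfl⟩
    exact ⟨e, ⟨Nat.dvd_of_mul_dvd_mul_left hp.bot_lt hd, hm⟩, rfl⟩
  · rintro ⟨e, ⟨he, hm⟩, rfl⟩
    exact ⟨⟨mul_dvd_mul_left p he, hp, hm⟩, dvd_mul_right p e⟩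

theorem filter_not_dvd_divisors_mul {p : ℕ} (hp : p.Prime) (m : ℕ) :
    {d ∈ (p * m).divisors | ¬ p ∣ d} = {d ∈ m.divisors | ¬ p ∣ d} := by
  ext d
  simp only [mem_filter, Nat.mem_divisors, mul_ne_zero_iff, hp.ne_zero, ne_eq, not_false_eq_true,
    true_and, and_congr_left_iff]
  intro hd _
  exact (hp.coprime_iff_not_dvd.2 hd).symm.dvd_mul_left

theorem sum_filter_dvd_divisors_mul (χ : ℕ →* R) {p : ℕ} (hp : p ≠ 0) (m : ℕ) :
    ∑ d ∈ (p * m).divisors with p ∣ d, χ d = χ p * ∑ d ∈ m.divisors, χ d := by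
  rw [filter_dvd_divisors_mul hp, sum_image (mul_right_injective₀ hp).injOn, mul_sum]
  simp only [map_mul]

theorem sum_filter_dvd_divisors (χ : ℕ →* R) {p : ℕ} (hp : p ≠ 0) (m : ℕ) :
    ∑ d ∈ m.divisors with p ∣ d, χ d =
      if p ∣ m then χ p * ∑ d ∈ (m / p).divisors, χ d else 0 := by
  split_ifs with h
  · rw [← sum_filter_dvd_divisors_mul χ hp, Nat.mul_div_cancel' h]
  · rw [filter_false_of_mem, sum_empty]
    exact fun d hd hpd => h (hpd.trans (Nat.dvd_of_mem_divisors hd))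

theorem isHeckeEigenvector_sum_divisors (χ : ℕ →* R) :
    IsHeckeEigenvector χ fun m => ∑ d ∈ m.divisors, χ d := by
  intro p hp m _
  rw [heckeOperator, ← sum_filter_dvd_divisors χ hp.ne_zero,
    ← sum_filter_add_sum_filter_not (p * m).divisors (p ∣ ·),
    sum_filter_dvd_divisors_mul χ hp.ne_zero, filter_not_dvd_divisors_mul hp]
  linear_combination sum_filter_add_sum_filter_not m.divisors (p ∣ ·) χ

end Hecke

section QuadraticCharacter

/-- The nontrivial Dirichlet character modulo `3`. -/
def chiThree : ℕ →* ℤ :=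
  (quadraticChar (ZMod 3)).toMonoidHom.comp (Nat.castRingHom (ZMod 3)).toMonoidHom

theorem chiThree_apply (n : ℕ) :
    chiThree n = (if n % 3 = 1 then 1 else 0) - (if n % 3 = 2 then 1 else 0) := by
  have hmod : chiThree n = quadraticChar (ZMod 3) ((n % 3 : ℕ) : ZMod 3) := by
    rw [ZMod.natCast_mod]
    rfl
  have hlt := Nat.mod_lt n three_pos
  rw [hmod]
  generalize n % 3 = r at hlt
  decide +revert

theorem sum_divisors_chiThree (m : ℕ) :
    ∑ d ∈ m.divisors, chiThree d = (dCount 1 m : ℤ) - dCount 2 m := by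
  simp only [chiThree_apply, sum_sub_distrib, sum_boole, dCount]

open Eisenstein in
theorem isHeckeEigenvector_reprCount :
    IsHeckeEigenvector chiThree fun m => (reprCount m : ℤ) := by
  intro p hp m _
  rw [heckeOperator, chiThree_apply]
  rcases (by lia : p % 3 = 0 ∨ p % 3 = 1 ∨ p % 3 = 2) with h | h | h
  · obtain rfl : p = 3 := ((Nat.prime_dvd_prime_iff_eq Nat.prime_three hp).1
      (Nat.dvd_of_mod_eq_zero h)).symm
    simp [reprCount_three_mul]
  · have hcount := reprCount_mul_add_of_mod_three_eq_one hp h m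
    simpa [h, one_add_one_eq_two] using congrArg (Nat.cast : ℕ → ℤ) hcount
  · rw [reprCount_mul_of_mod_three_eq_two hp h]
    split_ifs <;> simp_all

open Eisenstein in
theorem reprCount_eq_six_mul_sum_divisors_chiThree {m : ℕ} (hm : m ≠ 0) :
    (reprCount m : ℤ) = 6 * ∑ d ∈ m.divisors, chiThree d :=
  isHeckeEigenvector_reprCount.eq_of_apply_one_eq
    ((isHeckeEigenvector_sum_divisors chiThree).const_mul 6) (by simp [reprCount_one]) hm

end QuadraticCharacter

namespace Eisenstein

open QuadraticAlgebra

variable {m : ℕ} {z : Eisenstein}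

/-- Multiplication by `ω`, a rotation by `2π / 3`. -/
def rotation : Eisenstein ≃ Eisenstein where
  toFun z := ⟨-z.im, z.re - z.im⟩
  invFun z := ⟨z.im - z.re, -z.re⟩
  left_inv z := by ext <;> simp
  right_inv z := by ext <;> simp

/-- The reflection `x + y * ω ↦ y + x * ω`, whose axis has argument `π / 3`. -/
def reflection : Eisenstein ≃ Eisenstein where
  toFun z := ⟨z.im, z.re⟩
  invFun z := ⟨z.im, z.re⟩

theorem norm_rotation (z : Eisenstein) : (rotation z).norm = z.norm := by
  simp only [rotation, Equiv.coe_fn_mk, norm_eq_sq_sub_mul_add_sq]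
  ring

theorem norm_reflection (z : Eisenstein) : (reflection z).norm = z.norm := by
  simp only [reflection, Equiv.coe_fn_mk, norm_eq_sq_sub_mul_add_sq]
  ring

theorem ncard_sep_comp_eq {e : Eisenstein ≃ Eisenstein} (he : ∀ z, (e z).norm = z.norm)
    (P : Eisenstein → Prop) :
    {z ∈ normSphere m | P (e z)}.ncard = {z ∈ normSphere m | P z}.ncard := by
  rw [← Set.ncard_preimage_of_injective_subset_range (s := {z ∈ normSphere m | P z}) e.injective
    (e.range_eq_univ.symm ▸ Set.subset_univ _)]
  simp only [Set.preimage_ofPred_eq, mem_normSphere, he]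

/-- The Eisenstein integers with `0 < z.re` and `0 ≤ z.im` are those of argument in `[0, 2π / 3)`,
a fundamental domain for the rotation. -/
theorem reprCount_eq_three_mul_ncard_sector (hm : m ≠ 0) :
    reprCount m = 3 * {z ∈ normSphere m | 0 < z.re ∧ 0 ≤ z.im}.ncard := by
  let P (z : Eisenstein) : Prop := 0 < z.re ∧ 0 ≤ z.im
  have hcover : normSphere m = {z ∈ normSphere m | P z} ∪
      ({z ∈ normSphere m | P (rotation z)} ∪ {z ∈ normSphere m | P (rotation (rotation z))}) := by
    ext z
    have hz (h : z ∈ normSphere m) : ¬ (z.re = 0 ∧ z.im = 0) := fun ⟨hre, him⟩ => by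
      rw [mem_normSphere, norm_eq_sq_sub_mul_add_sq, hre, him] at h
      lia
    simp only [Set.mem_union, Set.mem_ofPred_eq, P, rotation, Equiv.coe_fn_mk]
    lia
  have hfin := finite_normSphere m
  rw [reprCount, congrArg Set.ncard hcover,
    Set.ncard_union_eq ?_ (hfin.sep _) ((hfin.sep _).union (hfin.sep _)),
    Set.ncard_union_eq ?_ (hfin.sep _) (hfin.sep _),
    ncard_sep_comp_eq norm_rotation (fun z => P (rotation z)), ncard_sep_comp_eq norm_rotation]
  · ring
  all_goals
    simp only [Set.disjoint_left, Set.mem_union, Set.mem_ofPred_eq, P, rotation, Equiv.coe_fn_mk]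
    lia

theorem mod_three_of_norm_mod_nine_eq_three (h : z.norm % 9 = 3) :
    z.re % 3 = 1 ∧ z.im % 3 = 2 ∨ z.re % 3 = 2 ∧ z.im % 3 = 1 := by
  have hadd : 3 ∣ z.re + z.im := by
    refine Int.prime_three.dvd_of_dvd_pow (n := 2) ((norm_modEq_three z).dvd_iff.1 ?_)
    lia
  obtain ⟨k, hk⟩ := hadd
  have hre : z.re % 3 ≠ 0 := fun h0 => by
    obtain ⟨l, hl⟩ := Int.dvd_of_emod_eq_zero h0
    rw [norm_eq_sq_sub_mul_add_sq, show z.im = 3 * (k - l) by lia, hl,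
      show (3 * l) ^ 2 - 3 * l * (3 * (k - l)) + (3 * (k - l)) ^ 2 =
        9 * (l ^ 2 - l * (k - l) + (k - l) ^ 2) by ring] at h
    lia
  lia

theorem ncard_sector_eq_two_mul_ncard (h : m % 9 = 3) :
    {z ∈ normSphere m | 0 < z.re ∧ 0 ≤ z.im}.ncard =
      2 * {z ∈ normSphere m | 0 < z.re ∧ 0 ≤ z.im ∧ z.re % 3 = 1}.ncard := by
  let Q (z : Eisenstein) : Prop := 0 < z.re ∧ 0 ≤ z.im ∧ z.re % 3 = 1
  have hmod {z : Eisenstein} (hz : z ∈ normSphere m) :=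
    mod_three_of_norm_mod_nine_eq_three (z := z) (by rw [mem_normSphere.1 hz]; lia)
  have hsplit : {z ∈ normSphere m | 0 < z.re ∧ 0 ≤ z.im} =
      {z ∈ normSphere m | Q z} ∪ {z ∈ normSphere m | Q (reflection z)} := by
    ext z
    have := hmod (z := z)
    simp only [Set.mem_union, Set.mem_ofPred_eq, Q, reflection, Equiv.coe_fn_mk]
    lia
  have hdisj : Disjoint {z ∈ normSphere m | Q z} {z ∈ normSphere m | Q (reflection z)} := by
    refine Set.disjoint_left.2 fun z hz hz' => ?_
    have := hmod hz.1
    simp only [Set.mem_ofPred_eq, Q, reflection, Equiv.coe_fn_mk] at hz hz'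
    lia
  have hfin := finite_normSphere m
  rw [hsplit, Set.ncard_union_eq hdisj (hfin.sep _) (hfin.sep _),
    ncard_sep_comp_eq norm_reflection, two_mul]

theorem mk_three_mul_add_mem_normSphere_iff {p q n : ℕ} :
    (⟨3 * p + 1, 3 * q + 2⟩ : Eisenstein) ∈ normSphere (9 * n + 3) ↔
      p ^ 2 + q ^ 2 + q = n + p * q := by
  rw [mem_normSphere, norm_eq_sq_sub_mul_add_sq]
  zify
  constructor <;> intro h <;> linarith

theorem image_mk_three_mul_add (n : ℕ) :
    (fun x : ℕ × ℕ => (⟨3 * x.1 + 1, 3 * x.2 + 2⟩ : Eisenstein)) ''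
        {x | x.1 ^ 2 + x.2 ^ 2 + x.2 = n + x.1 * x.2} =
      {z ∈ normSphere (9 * n + 3) | 0 < z.re ∧ 0 ≤ z.im ∧ z.re % 3 = 1} := by
  ext z
  constructor
  · rintro ⟨⟨p, q⟩, h, rfl⟩
    exact ⟨mk_three_mul_add_mem_normSphere_iff.2 h, by lia, by lia, by lia⟩
  · rintro ⟨hz, hre, him, hmod⟩
    have := mod_three_of_norm_mod_nine_eq_three (z := z) (by rw [mem_normSphere.1 hz]; lia)
    obtain ⟨p, hp⟩ : ∃ p : ℕ, z.re = 3 * p + 1 := ⟨(z.re / 3).toNat, by lia⟩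
    obtain ⟨q, hq⟩ : ∃ q : ℕ, z.im = 3 * q + 2 := ⟨(z.im / 3).toNat, by lia⟩
    obtain rfl : z = ⟨3 * p + 1, 3 * q + 2⟩ := QuadraticAlgebra.ext hp hq
    exact ⟨(p, q), mk_three_mul_add_mem_normSphere_iff.1 hz, rfl⟩

end Eisenstein

open Eisenstein in
theorem reprCount_eq_six_mul_a3 (n : ℕ) : reprCount (9 * n + 3) = 6 * a3 n := by
  have hinj : Function.Injective fun x : ℕ × ℕ => (⟨3 * x.1 + 1, 3 * x.2 + 2⟩ : Eisenstein) := by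
    rintro ⟨p, q⟩ ⟨p', q'⟩ h
    simp only [QuadraticAlgebra.mk.injEq] at h
    ext <;> simp only <;> lia
  rw [reprCount_eq_three_mul_ncard_sector (by lia), ncard_sector_eq_two_mul_ncard (by lia),
    ← image_mk_three_mul_add, Set.ncard_image_of_injective _ hinj, ← a3_eq_ncard]
  ring

end ThreeCore

/-- For every n ≥ 0, a₃(n) = d₁,₃(3n+1) − d₂,₃(3n+1). -/
theorem a3_eq_dCount_sub (n : ℕ) :
    (a3 n : ℤ) = (dCount 1 (3 * n + 1) : ℤ) - (dCount 2 (3 * n + 1) : ℤ) := by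
  have hcount : ThreeCore.Eisenstein.reprCount (3 * n + 1) = 6 * a3 n := by
    rw [← ThreeCore.Eisenstein.reprCount_three_mul, ← ThreeCore.reprCount_eq_six_mul_a3]
    congr 1
    ring
  have hdivisors := ThreeCore.reprCount_eq_six_mul_sum_divisors_chiThree (3 * n).succ_ne_zero
  rw [ThreeCore.sum_divisors_chiThree, hcount] at hdivisors
  lia
end

section
/- For every complex number q with 0 < |q| < 1, the bilateral series identity ∑_{n=−∞}^{∞} q^n/(1 − q^{3n+1}) = (q³;q³)_∞² / ((q;q³)_∞ (q²;q³)_∞) holds, where both sides converge (every denominator 1 − q^{3n+1} is nonzero since |q^{3n+1}| ≠ 1). -/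
/-- The infinite q-Pochhammer symbol `(a; q)_∞ = ∏_{n=0}^∞ (1 − a qⁿ)`. -/
noncomputable def qPochInf (a q : ℂ) : ℂ := ∏' n : ℕ, (1 - a * q ^ n)

/-!
As a function of `b`, the finite product `∏_{|j| ≤ N} (1 - b z Qʲ) / (1 - b Qʲ)` is rational with
simple poles at `b = Q⁻ⁿ`, `|n| ≤ N`. After division by `zᴺ`, its partial fraction expansion is a
finite sum of the terms `zⁿ / (1 - b Qⁿ)`, with weights that converge boundedly to
`(z; Q)_∞ (Q/z; Q)_∞ / (Q; Q)_∞²`, plus the constant `zᴺ⁺¹`, which tends to zero. Dominated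
convergence then gives Kronecker's evaluation of `∑ zⁿ / (1 - b Qⁿ)` for `|Q| < |z| < 1`. At
`Q = q³`, `b = z = q` the theta products at `b z = q²` and at `z = q` cancel, because
`θ(Q/x; Q) = θ(x; Q)`.
-/

open Finset Filter Topology

theorem prod_sub_div_sub_eq_one_add_sum {ι F : Type*} [DecidableEq ι] [Field F] {s : Finset ι}
    {v : ι → F} (hv : Set.InjOn v s) (w : ι → F) {x : F} (hx : ∀ i ∈ s, x ≠ v i) :
    ∏ i ∈ s, (x - w i) / (x - v i) =
      1 + ∑ i ∈ s, (v i - w i) / (x - v i) *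
        ∏ j ∈ s.erase i, (v i - w j) / (v i - v j) := by
  have degree_lt : (Lagrange.nodal s w - Lagrange.nodal s v).degree < #s := by
    rw [← Lagrange.degree_nodal (s := s) (v := w)]
    exact Polynomial.degree_sub_lt_left (by simp only [Lagrange.degree_nodal])
      Lagrange.nodal_ne_zero (by simp only [Lagrange.nodal_monic.leadingCoeff])
  have interpolation := congrArg (Polynomial.eval x) (Lagrange.eq_interpolate hv degree_lt)
  rw [Lagrange.eval_interpolate_not_at_node _ hx, Polynomial.eval_sub, Lagrange.eval_nodal,
    Lagrange.eval_nodal] at interpolation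
  have denom_ne_zero : ∏ i ∈ s, (x - v i) ≠ 0 :=
    prod_ne_zero_iff.mpr fun i hi => sub_ne_zero.mpr (hx i hi)
  rw [prod_div_distrib, div_eq_iff denom_ne_zero, add_mul, one_mul, ← sub_eq_iff_eq_add',
    interpolation, mul_comm]
  congr 1
  refine sum_congr rfl fun i hi => ?_
  rw [Polynomial.eval_sub, Lagrange.eval_nodal_at_node hi, Lagrange.eval_nodal, sub_zero,
    Lagrange.nodalWeight, ← mul_prod_erase s _ hi, prod_div_distrib, prod_inv_distrib]
  ring

theorem prod_Icc_neg_erase_zero {M : Type*} [CommMonoid M] (f : ℤ → M) (m n : ℕ) :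
    ∏ j ∈ (Icc (-m : ℤ) n).erase 0, f j =
      (∏ k ∈ range m, f (-(k + 1))) * ∏ k ∈ range n, f (k + 1) := by
  induction m with
  | zero =>
    induction n with
    | zero => simp
    | succ n ih =>
      have insert_eq : (Icc (-(0 : ℕ) : ℤ) (n + 1 : ℕ)).erase 0 =
          insert (n + 1 : ℤ) ((Icc (-(0 : ℕ) : ℤ) n).erase 0) := by
        ext j
        simp only [mem_erase, mem_Icc, mem_insert]
        omega
      rw [insert_eq, prod_insert (by simp), ih, prod_range_succ _ n, mul_comm, mul_assoc]
  | succ m ih =>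
    have insert_eq : (Icc (-(m + 1 : ℕ) : ℤ) n).erase 0 =
        insert (-(m + 1) : ℤ) ((Icc (-m : ℤ) n).erase 0) := by
      ext j
      simp only [mem_erase, mem_Icc, mem_insert]
      omega
    rw [insert_eq, prod_insert (by simp), ih, prod_range_succ, ← mul_assoc, mul_comm (f _)]

theorem tendsto_sum_of_dominated_convergence {α β E : Type*} [NormedAddCommGroup E]
    [CompleteSpace E] {l : Filter α} {s : α → Finset β} (hs : Tendsto s l atTop)
    {f : α → β → E} {g : β → E} {bound : β → ℝ} (h_sum : Summable bound)
    (h_lim : ∀ b, Tendsto (f · b) l (𝓝 (g b))) (h_bound : ∀ a b, ‖f a b‖ ≤ bound b) :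
    Tendsto (fun a => ∑ b ∈ s a, f a b) l (𝓝 (∑' b, g b)) := by
  simp only [fun a => sum_eq_tsum_indicator (f a) (s a)]
  refine tendsto_tsum_of_dominated_convergence h_sum (fun b => ?_) (Eventually.of_forall ?_)
  · refine (h_lim b).congr' ?_
    filter_upwards [hs.eventually_ge_atTop {b}] with a ha
    exact (Set.indicator_of_mem (mem_coe.mpr (singleton_subset_iff.mp ha)) _).symm
  · exact fun a b => (norm_indicator_le_norm_self _ _).trans (h_bound a b)

theorem zpow_injective_of_norm_ne_one {𝕜 : Type*} [NormedDivisionRing 𝕜] {q : 𝕜} (hq : q ≠ 0)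
    (hq1 : ‖q‖ ≠ 1) : Function.Injective fun n : ℤ => q ^ n := by
  refine Function.Injective.of_comp (f := norm) ?_
  simpa only [Function.comp_def, norm_zpow] using
    zpow_right_injective₀ (norm_pos_iff.mpr hq) hq1

theorem summable_zpow_div_one_sub_mul_zpow {𝕜 : Type*} [NormedField 𝕜] [CompleteSpace 𝕜]
    {q z b : 𝕜} (hq : q ≠ 0) (hqz : ‖q‖ < ‖z‖) (hz : ‖z‖ < 1) (hb : b ≠ 0) :
    Summable fun n : ℤ => z ^ n / (1 - b * q ^ n) := by
  have q_pow_tendsto : Tendsto (q ^ · : ℕ → 𝕜) cofinite (𝓝 0) := by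
    rw [Nat.cofinite_eq_atTop]
    exact tendsto_pow_atTop_nhds_zero_of_norm_lt_one (hqz.trans hz)
  refine Summable.of_nat_of_neg ?_ ?_
  · have lim : Tendsto (fun n : ℕ => (1 - b * q ^ n)⁻¹) cofinite (𝓝 (1 - b * 0)⁻¹) :=
      ((q_pow_tendsto.const_mul b).const_sub 1).inv₀ (by simp)
    simpa only [zpow_natCast, div_eq_mul_inv] using
      Summable.mul_tendsto_const (summable_norm_geometric_of_norm_lt_one hz) lim
  · have lim : Tendsto (fun n : ℕ => (q ^ n - b)⁻¹) cofinite (𝓝 (0 - b)⁻¹) :=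
      (q_pow_tendsto.sub_const b).inv₀ (by simpa using hb)
    have ratio_lt_one : ‖q / z‖ < 1 := by
      rw [norm_div]
      exact (div_lt_one ((norm_nonneg q).trans_lt hqz)).mpr hqz
    refine (Summable.mul_tendsto_const
      (summable_norm_geometric_of_norm_lt_one ratio_lt_one) lim).congr fun n => ?_
    have hqn : q ^ n ≠ 0 := pow_ne_zero n hq
    have clear_denom : q ^ n * (1 - b * (q ^ n)⁻¹) = q ^ n - b := by field_simp
    rw [zpow_neg, zpow_neg, zpow_natCast, zpow_natCast, ← mul_div_mul_left (z ^ n)⁻¹ _ hqn,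
      clear_denom, div_pow, div_eq_mul_inv, div_eq_mul_inv]

/-- The finite q-Pochhammer symbol `(a; q)_n = ∏_{k=0}^{n-1} (1 - a qᵏ)`. -/
def qPoch {R : Type*} [CommRing R] (a q : R) (n : ℕ) : R := ∏ k ∈ range n, (1 - a * q ^ k)

theorem qPoch_succ' {R : Type*} [CommRing R] (a q : R) (n : ℕ) :
    qPoch a q (n + 1) = (1 - a) * qPoch (a * q) q n := by
  simp only [qPoch, prod_range_succ' _ n, pow_zero, mul_one, pow_succ', mul_assoc]
  exact mul_comm _ _

section FiniteIdentity

variable {F : Type*} [Field F]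

theorem one_sub_mul_inv_div_one_sub_inv {a z : F} (ha : a ≠ 0) (hz : z ≠ 0) :
    (1 - (a * z)⁻¹) / (1 - a⁻¹) = z⁻¹ * ((1 - a * z) / (1 - a)) := by
  have one_sub_inv : ∀ {c : F}, c ≠ 0 → 1 - c⁻¹ = -c⁻¹ * (1 - c) := fun hc => by
    field_simp
    ring
  rw [one_sub_inv ha, one_sub_inv (mul_ne_zero ha hz), mul_div_mul_comm]
  congr 1
  field_simp

variable {q z : F}

theorem prod_Icc_neg_erase_zero_one_sub_div_one_sub (hq : q ≠ 0) (hz : z ≠ 0) {x : F}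
    (hx : x ≠ 0) (m n : ℕ) :
    ∏ j ∈ (Icc (-m : ℤ) n).erase 0, (1 - (x * z * q ^ j)⁻¹) / (1 - (x * q ^ j)⁻¹) =
      z⁻¹ ^ n * (qPoch (q / (x * z)) q m / qPoch (q / x) q m *
        (qPoch (x * z * q) q n / qPoch (x * q) q n)) := by
  have negative_part : ∀ (y : F) (k : ℕ), (y * q ^ (-(k + 1 : ℤ)))⁻¹ = q / y * q ^ k := by
    intro y k
    rw [mul_inv, zpow_neg, inv_inv, zpow_add_one₀ hq, zpow_natCast]
    ring
  have positive_part : ∀ k : ℕ, (1 - (x * z * q ^ (k + 1 : ℤ))⁻¹) / (1 - (x * q ^ (k + 1 : ℤ))⁻¹) =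
      z⁻¹ * ((1 - x * z * q * q ^ k) / (1 - x * q * q ^ k)) := by
    intro k
    have shift (y : F) : y * q ^ (k + 1 : ℤ) = y * q * q ^ k := by
      rw [zpow_add_one₀ hq, zpow_natCast]
      ring
    have swap : x * z * q * q ^ k = x * q * q ^ k * z := by ring
    rw [shift, shift, swap]
    exact one_sub_mul_inv_div_one_sub_inv (by simp [hx, hq]) hz
  rw [prod_Icc_neg_erase_zero]
  simp only [negative_part, positive_part, prod_mul_distrib, prod_div_distrib, prod_const,
    card_range, qPoch]
  ring

/-- The weight `(q/z; q)_{N+n} (z; q)_{N-n+1} / ((q; q)_{N+n} (q; q)_{N-n})` of `zⁿ / (1 - b qⁿ)`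
in the partial fraction expansion in `b` with poles `q⁻ⁿ`, `|n| ≤ N`. Outside this range `toNat`
clamps a negative length to zero, which keeps the weights bounded. -/
def bilateralWeight (q z : F) (N : ℕ) (n : ℤ) : F :=
  qPoch (q / z) q (N + n).toNat / qPoch q q (N + n).toNat *
    (qPoch z q ((N - n).toNat + 1) / qPoch q q (N - n).toNat)

theorem prod_Icc_neg_sub_div_sub_zpow_neg (hq : q ≠ 0) (hz : z ≠ 0) {b : F} (hb : b ≠ 0)
    (N : ℕ) :
    ∏ j ∈ Icc (-N : ℤ) N, (b - z⁻¹ * q ^ (-j)) / (b - q ^ (-j)) =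
      z⁻¹ ^ (N + 1) * (qPoch (b * z) q (N + 1) * qPoch (q / (b * z)) q N /
        (qPoch b q (N + 1) * qPoch (q / b) q N)) := by
  have factor : ∀ j : ℤ, (b - z⁻¹ * q ^ (-j)) / (b - q ^ (-j)) =
      (1 - (b * z * q ^ j)⁻¹) / (1 - (b * q ^ j)⁻¹) := by
    intro j
    rw [zpow_neg, ← mul_div_mul_left (1 - (b * z * q ^ j)⁻¹) (1 - (b * q ^ j)⁻¹) hb]
    congr 1 <;> field_simp
  simp only [factor]
  rw [← mul_prod_erase _ _ (show (0 : ℤ) ∈ Icc (-N : ℤ) N by simp),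
    prod_Icc_neg_erase_zero_one_sub_div_one_sub hq hz hb, zpow_zero, mul_one, mul_one,
    one_sub_mul_inv_div_one_sub_inv hb hz, qPoch_succ', qPoch_succ']
  simp only [div_eq_mul_inv, mul_inv]
  ring

theorem one_sub_mul_prod_Icc_neg_erase_sub_div_sub_zpow_neg (hq : q ≠ 0) (hz : z ≠ 0) {N : ℕ}
    {n : ℤ} (hn : n ∈ Icc (-N : ℤ) N) :
    (1 - z) * ∏ j ∈ (Icc (-N : ℤ) N).erase n,
        (q ^ (-n) - z⁻¹ * q ^ (-j)) / (q ^ (-n) - q ^ (-j)) =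
      z⁻¹ ^ N * (bilateralWeight q z N n * z ^ n) := by
  obtain ⟨hn₁, hn₂⟩ := mem_Icc.mp hn
  obtain ⟨l, hl⟩ := Int.eq_ofNat_of_zero_le (show 0 ≤ N + n by omega)
  obtain ⟨r, hr⟩ := Int.eq_ofNat_of_zero_le (show 0 ≤ N - n by omega)
  have factor : ∀ j : ℤ, (q ^ (-n) - z⁻¹ * q ^ (-j)) / (q ^ (-n) - q ^ (-j)) =
      (1 - (1 * z * q ^ (j - n))⁻¹) / (1 - (1 * q ^ (j - n))⁻¹) := by
    intro j
    have hqn : q ^ (-n) ≠ 0 := zpow_ne_zero _ hq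
    rw [zpow_sub₀ hq, ← mul_div_mul_left (1 - (1 * z * _)⁻¹) _ hqn, zpow_neg, zpow_neg]
    congr 1 <;> field_simp
  have reindex : ∏ j ∈ (Icc (-N : ℤ) N).erase n,
        (q ^ (-n) - z⁻¹ * q ^ (-j)) / (q ^ (-n) - q ^ (-j)) =
      ∏ j ∈ (Icc (-l : ℤ) r).erase 0, (1 - (1 * z * q ^ j)⁻¹) / (1 - (1 * q ^ j)⁻¹) := by
    refine prod_equiv (Equiv.subRight n) (fun j => ?_) fun j _ => factor j
    simp only [mem_erase, mem_Icc, Equiv.subRight_apply]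
    omega
  have power : z⁻¹ ^ r = z⁻¹ ^ N * z ^ n := by
    rw [← zpow_natCast, ← hr, inv_zpow', neg_sub, zpow_sub₀ hz, zpow_natCast, inv_pow]
    ring
  rw [reindex, prod_Icc_neg_erase_zero_one_sub_div_one_sub hq hz one_ne_zero, power,
    bilateralWeight, hl, hr, Int.toNat_natCast, Int.toNat_natCast, qPoch_succ' z]
  simp only [one_mul, div_one]
  ring

theorem sub_div_sub_zpow_neg_mul_prod_Icc_neg_erase (hq : q ≠ 0) (hz : z ≠ 0) (b : F) {N : ℕ}
    {n : ℤ} (hn : n ∈ Icc (-N : ℤ) N) :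
    (q ^ (-n) - z⁻¹ * q ^ (-n)) / (b - q ^ (-n)) * ∏ j ∈ (Icc (-N : ℤ) N).erase n,
        (q ^ (-n) - z⁻¹ * q ^ (-j)) / (q ^ (-n) - q ^ (-j)) =
      z⁻¹ ^ (N + 1) * (bilateralWeight q z N n * (z ^ n / (1 - b * q ^ n))) := by
  have simple_fraction : (q ^ (-n) - z⁻¹ * q ^ (-n)) / (b - q ^ (-n)) =
      z⁻¹ / (1 - b * q ^ n) * (1 - z) := by
    have hqn : -q ^ (-n) ≠ 0 := neg_ne_zero.mpr (zpow_ne_zero _ hq)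
    rw [div_mul_eq_mul_div, ← mul_div_mul_left (z⁻¹ * (1 - z)) _ hqn, zpow_neg]
    congr 1 <;> field_simp <;> ring
  rw [simple_fraction, mul_assoc, one_sub_mul_prod_Icc_neg_erase_sub_div_sub_zpow_neg hq hz hn]
  ring

theorem sum_bilateralWeight_mul (hq : Function.Injective fun n : ℤ => q ^ n) (hz : z ≠ 0)
    {b : F} (hb : b ≠ 0) (hbq : ∀ n : ℤ, b * q ^ n ≠ 1) (N : ℕ) :
    ∑ n ∈ Icc (-N : ℤ) N, bilateralWeight q z N n * (z ^ n / (1 - b * q ^ n)) =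
      qPoch (b * z) q (N + 1) * qPoch (q / (b * z)) q N /
        (qPoch b q (N + 1) * qPoch (q / b) q N) - z ^ (N + 1) := by
  have hq0 : q ≠ 0 := by
    rintro rfl
    exact absurd (@hq 1 2 (by simp)) (by norm_num)
  have b_ne_pole : ∀ n ∈ Icc (-N : ℤ) N, b ≠ q ^ (-n) := fun n _ h =>
    hbq n (by rw [h, ← zpow_add₀ hq0, neg_add_cancel, zpow_zero])
  have poles_injOn : Set.InjOn (fun n : ℤ => q ^ (-n)) (Icc (-N : ℤ) N : Finset ℤ) :=
    (hq.comp neg_injective).injOn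
  have partial_fractions :=
    prod_sub_div_sub_eq_one_add_sum poles_injOn (fun j => z⁻¹ * q ^ (-j)) b_ne_pole
  rw [prod_Icc_neg_sub_div_sub_zpow_neg hq0 hz hb,
    sum_congr rfl fun n hn => sub_div_sub_zpow_neg_mul_prod_Icc_neg_erase hq0 hz b hn, ← mul_sum]
    at partial_fractions
  rw [eq_sub_iff_add_eq]
  refine mul_left_cancel₀ (pow_ne_zero (N + 1) (inv_ne_zero hz)) ?_
  rw [partial_fractions, mul_add, ← mul_pow, inv_mul_cancel₀ hz, one_pow, add_comm]

end FiniteIdentity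

section InfiniteProducts

variable {q : ℂ}

theorem summable_norm_neg_mul_pow (hq : ‖q‖ < 1) (a : ℂ) :
    Summable fun n : ℕ => ‖-(a * q ^ n)‖ := by
  simpa only [norm_neg, norm_mul, norm_pow] using
    (summable_geometric_of_lt_one (norm_nonneg q) hq).mul_left ‖a‖

theorem tendsto_qPoch (hq : ‖q‖ < 1) (a : ℂ) :
    Tendsto (fun n => qPoch a q n) atTop (𝓝 (qPochInf a q)) := by
  have multipliable := multipliable_one_add_of_summable (summable_norm_neg_mul_pow hq a)
  simpa only [← sub_eq_add_neg, qPoch, qPochInf] using multipliable.hasProd.tendsto_prod_nat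

theorem qPochInf_ne_zero (hq : ‖q‖ < 1) {a : ℂ} (ha : ∀ n : ℕ, a * q ^ n ≠ 1) :
    qPochInf a q ≠ 0 := by
  have factor_ne_zero : ∀ n : ℕ, 1 + -(a * q ^ n) ≠ 0 := fun n => by
    rw [← sub_eq_add_neg]
    exact sub_ne_zero.mpr (ha n).symm
  simpa only [← sub_eq_add_neg, qPochInf] using
    tprod_one_add_ne_zero_of_summable factor_ne_zero (summable_norm_neg_mul_pow hq a)

theorem qPochInf_ne_zero_of_norm_lt_one (hq : ‖q‖ < 1) {a : ℂ} (ha : ‖a‖ < 1) :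
    qPochInf a q ≠ 0 := by
  refine qPochInf_ne_zero hq fun n h => ?_
  have norm_lt : ‖a * q ^ n‖ < 1 := by
    rw [norm_mul, norm_pow]
    exact mul_lt_one_of_nonneg_of_lt_one_left (norm_nonneg a) ha
      (pow_le_one₀ (norm_nonneg q) hq.le)
  exact norm_lt.ne (by rw [h, norm_one])

/-- The modified Jacobi theta function `θ(x; q) = (x; q)_∞ (q / x; q)_∞`, whose zeros are the
integral powers of `q`. -/
noncomputable def qTheta (x q : ℂ) : ℂ := qPochInf x q * qPochInf (q / x) q

theorem tendsto_qTheta (hq : ‖q‖ < 1) (x : ℂ) :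
    Tendsto (fun n => qPoch x q (n + 1) * qPoch (q / x) q n) atTop (𝓝 (qTheta x q)) :=
  ((tendsto_qPoch hq x).comp (tendsto_add_atTop_nat 1)).mul (tendsto_qPoch hq (q / x))

theorem qTheta_div (hq : q ≠ 0) (x : ℂ) : qTheta (q / x) q = qTheta x q := by
  rw [qTheta, qTheta, div_div_cancel₀ hq, mul_comm]

theorem qTheta_ne_zero (hq : ‖q‖ < 1) {x : ℂ} (hx : x ≠ 0)
    (hxq : ∀ n : ℤ, x * q ^ n ≠ 1) : qTheta x q ≠ 0 := by
  refine mul_ne_zero (qPochInf_ne_zero hq fun n => mod_cast hxq n)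
    (qPochInf_ne_zero hq fun n h => hxq (-(n + 1 : ℕ)) ?_)
  rw [div_mul_eq_mul_div, div_eq_one_iff_eq hx] at h
  rw [zpow_neg, zpow_natCast, pow_succ', h, mul_inv_cancel₀ hx]

theorem qTheta_ne_zero_of_norm_mem_Ioo {x : ℂ} (hx : ‖x‖ ∈ Set.Ioo ‖q‖ 1) : qTheta x q ≠ 0 := by
  have hq : ‖q‖ < 1 := hx.1.trans hx.2
  refine mul_ne_zero (qPochInf_ne_zero_of_norm_lt_one hq hx.2)
    (qPochInf_ne_zero_of_norm_lt_one hq ?_)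
  rw [norm_div]
  exact (div_lt_one ((norm_nonneg q).trans_lt hx.1)).mpr hx.1

theorem tendsto_qPoch_add_div_qPoch_self (hq : ‖q‖ < 1) (a : ℂ) (k : ℕ) :
    Tendsto (fun n => qPoch a q (n + k) / qPoch q q n) atTop
      (𝓝 (qPochInf a q / qPochInf q q)) :=
  ((tendsto_qPoch hq a).comp (tendsto_add_atTop_nat k)).div (tendsto_qPoch hq q)
    (qPochInf_ne_zero_of_norm_lt_one hq hq)

theorem tendsto_bilateralWeight (hq : ‖q‖ < 1) (z : ℂ) (n : ℤ) :
    Tendsto (bilateralWeight q z · n) atTop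
      (𝓝 (qTheta z q / qPochInf q q ^ 2)) := by
  have add_atTop : Tendsto (fun N : ℕ => (N + n).toNat) atTop atTop :=
    tendsto_atTop.mpr fun m => (eventually_ge_atTop (m + n.natAbs)).mono fun N _ => by omega
  have sub_atTop : Tendsto (fun N : ℕ => (N - n).toNat) atTop atTop :=
    tendsto_atTop.mpr fun m => (eventually_ge_atTop (m + n.natAbs)).mono fun N _ => by omega
  have limit_eq : qTheta z q / qPochInf q q ^ 2 =
      qPochInf (q / z) q / qPochInf q q * (qPochInf z q / qPochInf q q) := by
    rw [qTheta]
    ring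
  rw [limit_eq]
  exact ((tendsto_qPoch_add_div_qPoch_self hq (q / z) 0).comp add_atTop).mul
    ((tendsto_qPoch_add_div_qPoch_self hq z 1).comp sub_atTop)

theorem exists_norm_bilateralWeight_le (hq : ‖q‖ < 1) (z : ℂ) :
    ∃ C, ∀ N n, ‖bilateralWeight q z N n‖ ≤ C := by
  obtain ⟨A, hA⟩ := (Metric.isBounded_range_of_tendsto _
    (tendsto_qPoch_add_div_qPoch_self hq (q / z) 0)).exists_norm_le
  obtain ⟨B, hB⟩ := (Metric.isBounded_range_of_tendsto _
    (tendsto_qPoch_add_div_qPoch_self hq z 1)).exists_norm_le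
  refine ⟨A * B, fun N n => ?_⟩
  exact norm_mul_le_of_le (hA _ ⟨(N + n).toNat, rfl⟩) (hB _ ⟨(N - n).toNat, rfl⟩)

end InfiniteProducts

section BilateralSum

variable {q z b : ℂ}

theorem tendsto_sum_bilateralWeight_mul (hq : ‖q‖ < 1) (z : ℂ) {f : ℤ → ℂ} (hf : Summable f) :
    Tendsto (fun N : ℕ => ∑ n ∈ Icc (-N : ℤ) N, bilateralWeight q z N n * f n) atTop
      (𝓝 (qTheta z q / qPochInf q q ^ 2 * ∑' n, f n)) := by
  obtain ⟨C, hC⟩ := exists_norm_bilateralWeight_le hq z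
  rw [← tsum_mul_left]
  exact tendsto_sum_of_dominated_convergence tendsto_Icc_neg (hf.norm.mul_left C)
    (fun n => (tendsto_bilateralWeight hq z n).mul_const (f n))
    fun N n => norm_mul_le_of_le (hC N n) le_rfl

/-- Kronecker's formula: up to the factor `1 - b`, Ramanujan's summation of `₁ψ₁(b; b q; q, z)`. -/
theorem bilateral_sum_a3_general (hq : q ≠ 0) (hqz : ‖q‖ < ‖z‖) (hz : ‖z‖ < 1)
    (hb : b ≠ 0) (hbq : ∀ n : ℤ, b * q ^ n ≠ 1) :
    HasSum (fun n : ℤ => z ^ n / (1 - b * q ^ n))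
      (qPochInf q q ^ 2 * qTheta (b * z) q / (qTheta b q * qTheta z q)) := by
  have hq1 : ‖q‖ < 1 := hqz.trans hz
  have hz0 : z ≠ 0 := norm_pos_iff.mp ((norm_nonneg q).trans_lt hqz)
  have theta_b_ne_zero : qTheta b q ≠ 0 := qTheta_ne_zero hq1 hb hbq
  have theta_z_ne_zero : qTheta z q ≠ 0 := qTheta_ne_zero_of_norm_mem_Ioo ⟨hqz, hz⟩
  have poch_ne_zero : qPochInf q q ≠ 0 := qPochInf_ne_zero_of_norm_lt_one hq1 hq1
  have summable : Summable fun n : ℤ => z ^ n / (1 - b * q ^ n) :=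
    summable_zpow_div_one_sub_mul_zpow hq hqz hz hb
  have sum_tendsto := tendsto_sum_bilateralWeight_mul hq1 z summable
  have product_tendsto := ((tendsto_qTheta hq1 (b * z)).div (tendsto_qTheta hq1 b)
    theta_b_ne_zero).sub
      ((tendsto_pow_atTop_nhds_zero_of_norm_lt_one hz).comp (tendsto_add_atTop_nat 1))
  have limits_eq : qTheta z q / qPochInf q q ^ 2 * ∑' n : ℤ, z ^ n / (1 - b * q ^ n) =
      qTheta (b * z) q / qTheta b q - 0 :=
    tendsto_nhds_unique (sum_tendsto.congr (sum_bilateralWeight_mul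
      (zpow_injective_of_norm_ne_one hq hq1.ne) hz0 hb hbq)) product_tendsto
  rw [summable.hasSum_iff, eq_div_iff (mul_ne_zero theta_b_ne_zero theta_z_ne_zero)]
  field_simp at limits_eq
  linear_combination limits_eq

end BilateralSum

/-- For 0 < |q| < 1, the bilateral series ∑_{n∈ℤ} qⁿ/(1 − q^{3n+1}) converges and equals
(q³;q³)²_∞ / ((q;q³)_∞ (q²;q³)_∞). -/
theorem bilateral_sum_a3 (q : ℂ) (h0 : 0 < ‖q‖) (h1 : ‖q‖ < 1) :
    Summable (fun n : ℤ => q ^ n / (1 - q ^ (3 * n + 1))) ∧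
    ∑' n : ℤ, q ^ n / (1 - q ^ (3 * n + 1)) =
      qPochInf (q ^ 3) (q ^ 3) ^ 2 /
        (qPochInf q (q ^ 3) * qPochInf (q ^ 2) (q ^ 3)) := by
  have hq : q ≠ 0 := norm_pos_iff.mp h0
  have zpow_eq (n : ℤ) : q ^ (3 * n + 1) = q * (q ^ 3) ^ n := by
    rw [zpow_add_one₀ hq, zpow_mul, mul_comm, zpow_ofNat]
  have zpow_ne_one (n : ℤ) : q * (q ^ 3) ^ n ≠ 1 := fun h => by
    have exponent_eq_zero : 3 * n + 1 = 0 :=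
      zpow_injective_of_norm_ne_one hq h1.ne (by simp only [zpow_eq, h, zpow_zero])
    omega
  have norm_cube_lt : ‖q ^ 3‖ < ‖q‖ := by
    rw [norm_pow]
    exact pow_lt_self_of_lt_one₀ h0 h1 (by norm_num)
  have theta_ne_zero : qTheta q (q ^ 3) ≠ 0 := qTheta_ne_zero_of_norm_mem_Ioo ⟨norm_cube_lt, h1⟩
  have cube_div : q ^ 3 / q = q ^ 2 := by rw [pow_succ, mul_div_cancel_right₀ _ hq]
  have theta_mul_self : qTheta (q * q) (q ^ 3) = qTheta q (q ^ 3) := by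
    rw [← pow_two, ← cube_div, qTheta_div (pow_ne_zero 3 hq)]
  have kronecker := bilateral_sum_a3_general (pow_ne_zero 3 hq) norm_cube_lt h1 hq zpow_ne_one
  rw [theta_mul_self, mul_div_mul_right _ _ theta_ne_zero, qTheta, cube_div] at kronecker
  simp only [zpow_eq]
  exact ⟨kronecker.summable, kronecker.tsum_eq⟩
end
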